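/- Let -2 < γ ≤ 1, α, β > 0, p ≥ 1, μ ∈ (0,1), and let h : ℝ³ × ℝ³ → [0,∞) with ∫∫ h^{μp} dx dv < ∞. Then ∫_{ℝ⁶} h(x,v)^{μp} · (∫₀^∞ ∫_{ℝ³} ‖v - v*‖^γ · exp(-pμ(α‖x - t(v - v*)‖² + β‖v*‖²)) dv* dt) dv dx ≤ √(π/(αμp)) · (2π/(γ+2) + (π/(βpμ))^{3/2}) · ∫_{ℝ⁶} h^{μp} dx dv. -/

import Mathlib

open MeasureTheory Real

/-! The `t`-integral along the ray `{t • V : t > 0}`, with `V = v - v*`, is `rayIntegral`. The rays in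
the directions `V` and `-V` together form a line, along which the Gaussian integrates to at most
`√(π / a) / ‖V‖`, where `a = p μ α` (`rayIntegral_add_neg_le`).

Split the `V`-integral at `‖V‖ = 1`. Outside the unit ball, `‖V‖ ^ γ * √(π / a) / ‖V‖ ≤ √(π / a)`
since `γ ≤ 1`, so what remains is a Gaussian in `v - V`, contributing `(π / b) ^ (3 / 2)` with
`b = p μ β`. Inside, the Gaussian in `v - V` is at most `1`, and what remains is averaged over
`V ↦ -V`: this gains the factor `1 / 2` over the bound for full lines, and turns
`∫ ‖V‖ ^ (γ - 1) = 4 π / (γ + 2)` over the unit ball into the constant `2 π / (γ + 2)`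
(`lintegral_ball_rayIntegral_le`). The averaging is essential: a pointwise bound on the ray integral
would only give `4 π / (γ + 2)`.

The inner double integral is thus bounded uniformly in `(x, v)`. All inner integrals are estimated
as lower Lebesgue integrals, which dominate the norms of the Bochner integrals whether or not the
latter converge. -/

local notation "E3" => EuclideanSpace ℝ (Fin 3)

lemma norm_sub_smul_sq_ge (x V : E3) (hV : V ≠ 0) (t : ℝ) :
    ‖V‖ ^ 2 * (t - inner ℝ x V / ‖V‖ ^ 2) ^ 2 ≤ ‖x - t • V‖ ^ 2 := by
  have hV' : 0 < ‖V‖ := norm_pos_iff.2 hV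
  have h1 : ‖x - t • V‖ ^ 2 = ‖x‖ ^ 2 - 2 * (t * inner ℝ x V) + t ^ 2 * ‖V‖ ^ 2 := by
    rw [norm_sub_sq_real, inner_smul_right, norm_smul, mul_pow, Real.norm_eq_abs, sq_abs]
  have h2 : (inner ℝ x V) ^ 2 ≤ ‖x‖ ^ 2 * ‖V‖ ^ 2 := by
    rw [← mul_pow, ← sq_abs (inner ℝ x V)]
    exact pow_le_pow_left₀ (abs_nonneg _) (abs_real_inner_le_norm x V) 2
  have h3 : (inner ℝ x V) ^ 2 / ‖V‖ ^ 2 ≤ ‖x‖ ^ 2 := by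
    rw [div_le_iff₀ (by positivity)]; exact h2
  have h4 : ‖V‖ ^ 2 * (t - inner ℝ x V / ‖V‖ ^ 2) ^ 2
      = t ^ 2 * ‖V‖ ^ 2 - 2 * (t * inner ℝ x V) + (inner ℝ x V) ^ 2 / ‖V‖ ^ 2 := by
    field_simp
    ring
  rw [h1, h4]
  linarith

lemma lintegral_gaussian_line_le {a : ℝ} (ha : 0 < a) (x V : E3) (hV : V ≠ 0) :
    ∫⁻ t : ℝ, ENNReal.ofReal (rexp (-a * ‖x - t • V‖ ^ 2))
      ≤ ENNReal.ofReal (√(π / a) / ‖V‖) := by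
  have hV' : 0 < ‖V‖ := norm_pos_iff.2 hV
  have hb : 0 < a * ‖V‖ ^ 2 := by positivity
  set s := inner ℝ x V / ‖V‖ ^ 2
  calc ∫⁻ t : ℝ, ENNReal.ofReal (rexp (-a * ‖x - t • V‖ ^ 2))
      ≤ ∫⁻ t : ℝ, ENNReal.ofReal (rexp (-(a * ‖V‖ ^ 2) * (t - s) ^ 2)) := by
        refine lintegral_mono fun t => ENNReal.ofReal_le_ofReal (exp_le_exp.2 ?_)
        have := mul_le_mul_of_nonneg_left (norm_sub_smul_sq_ge x V hV t) ha.le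
        linarith
    _ = ∫⁻ t : ℝ, ENNReal.ofReal (rexp (-(a * ‖V‖ ^ 2) * t ^ 2)) :=
        lintegral_sub_right_eq_self
          (fun t : ℝ => ENNReal.ofReal (rexp (-(a * ‖V‖ ^ 2) * t ^ 2))) s
    _ = ENNReal.ofReal (√(π / (a * ‖V‖ ^ 2))) := by
        rw [← ofReal_integral_eq_lintegral_ofReal (integrable_exp_neg_mul_sq hb)
          (.of_forall fun _ => (exp_pos _).le), integral_gaussian]
    _ = _ := by
        rw [← div_div, Real.sqrt_div' _ (by positivity), Real.sqrt_sq hV'.le]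

/-- The integral of the Gaussian `exp (-a ‖x - y‖ ^ 2)` in `y` along the ray `y = t • V`, `t > 0`,
with respect to `dt`. -/
noncomputable def rayIntegral (a : ℝ) (x V : E3) : ENNReal :=
  ∫⁻ t in Set.Ioi (0 : ℝ), ENNReal.ofReal (rexp (-a * ‖x - t • V‖ ^ 2))

lemma measurable_rayIntegral (a : ℝ) (x : E3) : Measurable (rayIntegral a x) := by
  unfold rayIntegral
  apply Measurable.lintegral_prod_right' (ν := volume.restrict (Set.Ioi (0 : ℝ)))
    (f := fun q : E3 × ℝ => ENNReal.ofReal (rexp (-a * ‖x - q.2 • q.1‖ ^ 2)))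
  fun_prop

lemma rayIntegral_neg (a : ℝ) (x V : E3) :
    rayIntegral a x (-V) =
      ∫⁻ t in Set.Iio (0 : ℝ), ENNReal.ofReal (rexp (-a * ‖x - t • V‖ ^ 2)) := by
  unfold rayIntegral
  rw [← lintegral_indicator measurableSet_Ioi, ← lintegral_indicator measurableSet_Iio,
    ← lintegral_neg_eq_self]
  refine lintegral_congr fun t => ?_
  simp [Set.indicator]

lemma rayIntegral_add_neg_le {a : ℝ} (ha : 0 < a) (x V : E3) (hV : V ≠ 0) :
    rayIntegral a x V + rayIntegral a x (-V) ≤ ENNReal.ofReal (√(π / a) / ‖V‖) := by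
  rw [rayIntegral_neg, rayIntegral, ← lintegral_union measurableSet_Iio]
  · exact (setLIntegral_le_lintegral _ _).trans (lintegral_gaussian_line_le ha x V hV)
  · exact Set.disjoint_left.2 fun t h1 h2 => lt_asymm (Set.mem_Ioi.1 h1) (Set.mem_Iio.1 h2)

lemma rayIntegral_le {a : ℝ} (ha : 0 < a) (x V : E3) (hV : V ≠ 0) :
    rayIntegral a x V ≤ ENNReal.ofReal (√(π / a) / ‖V‖) :=
  le_self_add.trans (rayIntegral_add_neg_le ha x V hV)

lemma lintegral_ball_rpow (γ : ℝ) (hγ : -2 < γ) :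
    ∫⁻ V in Metric.ball (0 : E3) 1, ENNReal.ofReal (‖V‖ ^ (γ - 1))
      = ENNReal.ofReal (4 * π / (γ + 2)) := by
  -- the radial density: `y ^ 2` comes from the surface measure of spheres
  have hpow : ∀ y ∈ Set.Ioo (0 : ℝ) 1, y ^ (γ + 1) = y ^ (3 - 1) • y ^ (γ - 1) := by
    intro y hy
    rw [smul_eq_mul, ← Real.rpow_natCast, ← Real.rpow_add hy.1]
    congr 1
    push_cast
    ring
  have hint : IntegrableOn (fun V : E3 => ‖V‖ ^ (γ - 1)) (Metric.ball 0 1) := by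
    rw [integrableOn_fun_norm_addHaar volume (f := fun y : ℝ => y ^ (γ - 1)),
      finrank_euclideanSpace_fin]
    refine IntegrableOn.congr_fun ?_ hpow measurableSet_Ioo
    exact (intervalIntegral.integrableOn_Ioo_rpow_iff one_pos).2 (by linarith)
  rw [← ofReal_integral_eq_lintegral_ofReal hint (.of_forall fun _ => by positivity)]
  congr 1
  rw [← integral_indicator measurableSet_ball]
  have h1 : (Metric.ball (0 : E3) 1).indicator (fun V : E3 => ‖V‖ ^ (γ - 1))
      = fun V : E3 => (Set.Iio (1 : ℝ)).indicator (fun y : ℝ => y ^ (γ - 1)) ‖V‖ := by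
    ext V
    simp [Set.indicator]
  have h2 : ∫ y in Set.Ioi (0 : ℝ), y ^ (3 - 1) • (Set.Iio (1 : ℝ)).indicator
      (fun y : ℝ => y ^ (γ - 1)) y = 1 / (γ + 2) := by
    calc _ = ∫ y in Set.Ioi (0 : ℝ), (Set.Ioo (0 : ℝ) 1).indicator
          (fun y : ℝ => y ^ (γ + 1)) y := by
          refine setIntegral_congr_fun measurableSet_Ioi fun y hy => ?_
          by_cases h : y < 1
          · have hy' : y ∈ Set.Ioo (0 : ℝ) 1 := ⟨hy, h⟩
            simp only [Set.indicator_of_mem hy', Set.indicator_of_mem (Set.mem_Iio.2 h)]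
            exact (hpow y hy').symm
          · simp [h]
      _ = ∫ y in (0 : ℝ)..1, y ^ (γ + 1) := by
          rw [setIntegral_indicator measurableSet_Ioo,
            Set.inter_eq_right.2 fun y hy => hy.1,
            intervalIntegral.integral_of_le zero_le_one, integral_Ioc_eq_integral_Ioo]
      _ = _ := by
          rw [integral_rpow (Or.inl (by linarith)), Real.one_rpow,
            Real.zero_rpow (by linarith), sub_zero]
          ring
  have h3 : (volume : Measure E3).real (Metric.ball 0 1) = π * 4 / 3 := by
    rw [Measure.real, EuclideanSpace.volume_ball_fin_three]
    simp only [ENNReal.ofReal_one, one_pow, one_mul]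
    exact ENNReal.toReal_ofReal (by positivity)
  rw [h1, integral_fun_norm_addHaar volume, finrank_euclideanSpace_fin, h2, h3]
  simp only [nsmul_eq_mul, smul_eq_mul]
  push_cast
  ring

/-- The contribution of the unit ball. The map `V ↦ -V` preserves the ball and the weight, so the
ray integral may be replaced by half of the integral along the full line. -/
lemma lintegral_ball_rayIntegral_le {γ a : ℝ} (hγ : -2 < γ) (ha : 0 < a) (x : E3) :
    ∫⁻ V in Metric.ball (0 : E3) 1, ENNReal.ofReal (‖V‖ ^ γ) * rayIntegral a x V
      ≤ ENNReal.ofReal (√(π / a) * (2 * π / (γ + 2))) := by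
  have hmeas : Measurable fun V : E3 => ENNReal.ofReal (‖V‖ ^ γ) * rayIntegral a x V :=
    (by fun_prop : Measurable fun V : E3 => ENNReal.ofReal (‖V‖ ^ γ)).mul
      (measurable_rayIntegral a x)
  have hsymm : ∫⁻ V in Metric.ball (0 : E3) 1, ENNReal.ofReal (‖V‖ ^ γ) * rayIntegral a x V
      = ∫⁻ V in Metric.ball (0 : E3) 1, ENNReal.ofReal (‖V‖ ^ γ) * rayIntegral a x (-V) := by
    rw [← lintegral_indicator measurableSet_ball, ← lintegral_indicator measurableSet_ball,
      ← lintegral_neg_eq_self]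
    refine lintegral_congr fun V => ?_
    simp [Set.indicator]
  have hne : ∀ᵐ V : E3, V ≠ 0 := Measure.ae_ne volume 0
  have hg : 0 < γ + 2 := by linarith
  have h2 : 2 * ∫⁻ V in Metric.ball (0 : E3) 1, ENNReal.ofReal (‖V‖ ^ γ) * rayIntegral a x V
      ≤ ENNReal.ofReal (√(π / a) * (4 * π / (γ + 2))) := by
    calc 2 * ∫⁻ V in Metric.ball (0 : E3) 1, ENNReal.ofReal (‖V‖ ^ γ) * rayIntegral a x V
        = ∫⁻ V in Metric.ball (0 : E3) 1,
            (ENNReal.ofReal (‖V‖ ^ γ) * rayIntegral a x V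
              + ENNReal.ofReal (‖V‖ ^ γ) * rayIntegral a x (-V)) := by
          rw [lintegral_add_left hmeas, ← hsymm, two_mul]
      _ ≤ ∫⁻ V in Metric.ball (0 : E3) 1,
            ENNReal.ofReal (√(π / a)) * ENNReal.ofReal (‖V‖ ^ (γ - 1)) := by
          refine lintegral_mono_ae ((ae_restrict_of_ae hne).mono fun V hV => ?_)
          have hV' : 0 < ‖V‖ := norm_pos_iff.2 hV
          rw [← mul_add]
          refine (mul_le_mul_right (rayIntegral_add_neg_le ha x V hV) _).trans_eq ?_
          rw [← ENNReal.ofReal_mul (by positivity), ← ENNReal.ofReal_mul (by positivity),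
            Real.rpow_sub_one hV'.ne']
          congr 1
          ring
      _ = _ := by
          rw [lintegral_const_mul _ (by fun_prop), lintegral_ball_rpow γ hγ,
            ← ENNReal.ofReal_mul (by positivity)]
  rw [show √(π / a) * (4 * π / (γ + 2)) = 2 * (√(π / a) * (2 * π / (γ + 2))) by ring,
    ENNReal.ofReal_mul zero_le_two, ENNReal.ofReal_ofNat] at h2
  exact (ENNReal.mul_le_mul_iff_right (by simp) (by simp)).1 h2

lemma lintegral_gaussian_shift {b : ℝ} (hb : 0 < b) (v : E3) :
    ∫⁻ V : E3, ENNReal.ofReal (rexp (-b * ‖v - V‖ ^ 2))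
      = ENNReal.ofReal ((π / b) ^ ((3 : ℝ) / 2)) := by
  have hI := GaussianFourier.integral_rexp_neg_mul_sq_norm (V := E3) hb
  rw [finrank_euclideanSpace_fin] at hI
  push_cast at hI
  have hint : Integrable fun V : E3 => rexp (-b * ‖V‖ ^ 2) := by
    refine Integrable.of_integral_ne_zero ?_
    rw [hI]
    positivity
  rw [lintegral_sub_left_eq_self (fun V : E3 => ENNReal.ofReal (rexp (-b * ‖V‖ ^ 2))) v,
    ← ofReal_integral_eq_lintegral_ofReal hint (.of_forall fun _ => (exp_pos _).le), hI]

/-- The uniform bound on the inner double integral, in the variable `V = v - v*`. -/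
lemma lintegral_weight_rayIntegral_le {γ a b : ℝ} (hγ1 : -2 < γ) (hγ2 : γ ≤ 1)
    (ha : 0 < a) (hb : 0 < b) (x v : E3) :
    ∫⁻ V : E3, ENNReal.ofReal (‖V‖ ^ γ) * ENNReal.ofReal (rexp (-b * ‖v - V‖ ^ 2))
        * rayIntegral a x V
      ≤ ENNReal.ofReal (√(π / a) * (2 * π / (γ + 2) + (π / b) ^ ((3 : ℝ) / 2))) := by
  have hg : 0 < γ + 2 := by linarith
  have hne : ∀ᵐ V : E3, V ≠ 0 := Measure.ae_ne volume 0
  rw [← lintegral_add_compl _ (measurableSet_ball (x := (0 : E3)) (ε := 1)), mul_add,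
    ENNReal.ofReal_add (by positivity) (by positivity)]
  refine add_le_add ?_ ?_
  · refine le_trans (lintegral_mono fun V => ?_) (lintegral_ball_rayIntegral_le hγ1 ha x)
    refine mul_le_mul_left (mul_le_of_le_one_right' ?_) _
    rw [ENNReal.ofReal_le_one, exp_le_one_iff]
    nlinarith [sq_nonneg ‖v - V‖]
  · calc _ ≤ ∫⁻ V in (Metric.ball (0 : E3) 1)ᶜ,
          ENNReal.ofReal (√(π / a)) * ENNReal.ofReal (rexp (-b * ‖v - V‖ ^ 2)) := by
          refine lintegral_mono_ae ?_
          filter_upwards [ae_restrict_of_ae hne,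
            ae_restrict_mem (measurableSet_ball (x := (0 : E3)) (ε := 1)).compl] with V hV hm
          have hV1 : 1 ≤ ‖V‖ := by simpa using hm
          have hV' : 0 < ‖V‖ := by linarith
          rw [mul_right_comm]
          refine mul_le_mul_left ((mul_le_mul_right (rayIntegral_le ha x V hV) _).trans ?_) _
          rw [← ENNReal.ofReal_mul (by positivity)]
          refine ENNReal.ofReal_le_ofReal ?_
          have h1 : ‖V‖ ^ γ ≤ ‖V‖ := by
            simpa using Real.rpow_le_rpow_of_exponent_le hV1 hγ2
          rw [mul_div_assoc', div_le_iff₀ hV', mul_comm]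
          exact mul_le_mul_of_nonneg_left h1 (Real.sqrt_nonneg _)
      _ ≤ ∫⁻ V : E3,
          ENNReal.ofReal (√(π / a)) * ENNReal.ofReal (rexp (-b * ‖v - V‖ ^ 2)) :=
          setLIntegral_le_lintegral _ _
      _ = _ := by
          rw [lintegral_const_mul _ (by fun_prop), lintegral_gaussian_shift hb,
            ← ENNReal.ofReal_mul (by positivity)]

/-- The same bound for the Bochner integrals, in the original variable `v* = v - V`. No integrability
is needed, since a divergent Bochner integral is `0`. -/
lemma inner_integral_le {γ α β c : ℝ} (hγ1 : -2 < γ) (hγ2 : γ ≤ 1)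
    (hα : 0 < α) (hβ : 0 < β) (hc : 0 < c) (x v : E3) :
    (∫ t in Set.Ioi (0 : ℝ), ∫ vs : E3, ‖v - vs‖ ^ γ *
        rexp (-c * (α * ‖x - t • (v - vs)‖ ^ 2 + β * ‖vs‖ ^ 2)))
      ≤ √(π / (c * α)) * (2 * π / (γ + 2) + (π / (c * β)) ^ ((3 : ℝ) / 2)) := by
  have hg : 0 < γ + 2 := by linarith
  rw [← ENNReal.ofReal_le_ofReal_iff (by positivity)]
  set f : ℝ → E3 → ℝ := fun t vs => ‖v - vs‖ ^ γ *
        rexp (-c * (α * ‖x - t • (v - vs)‖ ^ 2 + β * ‖vs‖ ^ 2)) with hf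
  calc ENNReal.ofReal (∫ t in Set.Ioi (0 : ℝ), ∫ vs : E3, f t vs)
      ≤ ‖∫ t in Set.Ioi (0 : ℝ), ∫ vs : E3, f t vs‖ₑ := Real.ofReal_le_enorm _
    _ ≤ ∫⁻ t in Set.Ioi (0 : ℝ), ‖∫ vs : E3, f t vs‖ₑ := enorm_integral_le_lintegral_enorm _
    _ ≤ ∫⁻ t in Set.Ioi (0 : ℝ), ∫⁻ vs : E3, ‖f t vs‖ₑ :=
        lintegral_mono fun t => enorm_integral_le_lintegral_enorm _
    _ = ∫⁻ vs : E3, ∫⁻ t in Set.Ioi (0 : ℝ), ‖f t vs‖ₑ := by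
        refine lintegral_lintegral_swap (Measurable.aemeasurable ?_)
        unfold Function.uncurry
        simp only [hf]
        fun_prop
    _ = ∫⁻ vs : E3, (fun V : E3 => ENNReal.ofReal (‖V‖ ^ γ)
          * ENNReal.ofReal (rexp (-(c * β) * ‖v - V‖ ^ 2)) * rayIntegral (c * α) x V)
          (v - vs) := by
        refine lintegral_congr fun vs => ?_
        simp only [rayIntegral]
        rw [← lintegral_const_mul _ (by fun_prop)]
        refine lintegral_congr fun t => ?_
        rw [Real.enorm_of_nonneg (by positivity), ← ENNReal.ofReal_mul (by positivity),
          ← ENNReal.ofReal_mul (by positivity), mul_assoc, ← Real.exp_add, sub_sub_cancel]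
        simp only [hf]
        congr 3
        ring
    _ ≤ _ :=
        (lintegral_sub_left_eq_self (fun V : E3 => ENNReal.ofReal (‖V‖ ^ γ)
          * ENNReal.ofReal (rexp (-(c * β) * ‖v - V‖ ^ 2)) * rayIntegral (c * α) x V) v).trans_le
          (lintegral_weight_rayIntegral_le hγ1 hγ2 (by positivity) (by positivity) x v)

theorem N2_weighted_estimate
    (γ : ℝ) (hγ1 : -2 < γ) (hγ2 : γ ≤ 1)
    (α β : ℝ) (hα : 0 < α) (hβ : 0 < β)
    (p μ : ℝ) (hp : 1 ≤ p) (hμ : μ ∈ Set.Ioo (0 : ℝ) 1)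
    (h : EuclideanSpace ℝ (Fin 3) × EuclideanSpace ℝ (Fin 3) → ℝ)
    (hmeas : Measurable h) (hnonneg : ∀ q, 0 ≤ h q)
    (hint : Integrable (fun q => h q ^ (μ * p))) :
    (∫ q : EuclideanSpace ℝ (Fin 3) × EuclideanSpace ℝ (Fin 3),
        h q ^ (μ * p) *
          ∫ t in Set.Ioi (0 : ℝ), ∫ vs : EuclideanSpace ℝ (Fin 3),
            ‖q.2 - vs‖ ^ γ *
              Real.exp (-(p * μ) *
                (α * ‖q.1 - t • (q.2 - vs)‖ ^ 2 + β * ‖vs‖ ^ 2))) ≤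
      Real.sqrt (π / (α * μ * p)) *
          (2 * π / (γ + 2) + (π / (β * p * μ)) ^ ((3 : ℝ) / 2)) *
        ∫ q, h q ^ (μ * p) := by
  have hc : 0 < p * μ := mul_pos (by linarith) hμ.1
  rw [← integral_const_mul]
  refine integral_mono_of_nonneg (.of_forall fun q => ?_) (hint.const_mul _)
    (.of_forall fun q => ?_)
  · have := hnonneg q
    positivity
  · have h1 := inner_integral_le hγ1 hγ2 hα hβ hc q.1 q.2
    rw [show p * μ * α = α * μ * p by ring, show p * μ * β = β * p * μ by ring] at h1
    have h2 := mul_le_mul_of_nonneg_left h1 (Real.rpow_nonneg (hnonneg q) (μ * p))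
    rwa [mul_comm _ (√(π / (α * μ * p)) * _)] at h2
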